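/- Let α ∈ (0,1) be irrational, h : 𝕋¹ → ℝ a C^∞ function with Fourier coefficients ĥ(m), and T(x,y) = (x+α, y+h(x) mod 1) on 𝕋² = (ℝ/ℤ)². Fix τ > 0, let E = {k ∈ ℕ : k > 1 and q_{k+1} > q_k^{1/τ+3}} and M = ⋃_{k∈E} {±m q_k : m = 1,…,a_k}, where q_k, a_k are the continued-fraction denominators and partial quotients of α. If M is finite, then for every T-invariant Borel probability measure ρ on 𝕋², the measure complexity of (𝕋²,T,ρ) is weaker than U_τ(n) = n^τ. -/

import Mathlib

open MeasureTheory Filter Real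

/-- The Bowen-type averaged metric `d̄_n(x,y) = (1/n) ∑_{i=0}^{n-1} d(Tⁱx, Tⁱy)`. -/
noncomputable def dbar {X : Type*} [PseudoMetricSpace X] (T : X → X) (n : ℕ) (x y : X) : ℝ :=
  (∑ i ∈ Finset.range n, dist (T^[i] x) (T^[i] y)) / n

/-- The measure complexity function `S_n(d,ρ,ε)`. -/
noncomputable def measureComplexity {X : Type*} [PseudoMetricSpace X] [MeasurableSpace X]
    (T : X → X) (ρ : Measure X) (n : ℕ) (ε : ℝ) : ℕ :=
  sInf {m : ℕ | ∃ xs : Fin m → X,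
    1 - ε < (ρ (⋃ i, {y | dbar T n (xs i) y < ε})).toReal}

/-- The measure complexity of `(X,T,ρ)` is weaker than `U`. -/
def ComplexityWeakerThan {X : Type*} [PseudoMetricSpace X] [MeasurableSpace X]
    (T : X → X) (ρ : Measure X) (U : ℕ → ℝ) : Prop :=
  ∀ ε > (0 : ℝ),
    Filter.atTop.liminf (fun n : ℕ => (measureComplexity T ρ n ε : ℝ) / U n) = 0

/-!
If `M` is finite, then `q_{k+1} ≤ q_k ^ s` for all large `k`. Given a denominator `b`, some
convergent denominator `q` lies between `2b` and a fixed power of `b`; since the nonzero integer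
`b p - a q` is `q (b α - a) - b (q α - p)` up to sign, with the second term at most `1 / 2`, this
forces `|b α - a| ≥ 1 / (2 q)`, so `α` is not a Liouville number.

The small divisors `e(mα) - 1` are then bounded below by a negative power of `|m|`, which the rapid
decay of the Fourier coefficients of the smooth function `h` absorbs, and
`h = c + (g ∘ R_α - g)` has a continuous solution `g`. The shear `(x, y) ↦ (x, y + g x)`
conjugates `T` to the translation of the torus by `(α, c)`. Hence the iterates of `T` are uniformly
equicontinuous, finitely many `d̄_n`-balls cover the torus with a number independent of `n`, and the
complexity is weaker than any sequence tending to infinity.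
-/

section ContinuedFraction

variable {K : Type*} [Field K] [LinearOrder K] [FloorRing K]

lemma exists_int_contsAux_eq (v : K) (n : ℕ) :
    ∃ p q : ℤ, (GenContFract.of v).contsAux n = ⟨p, q⟩ := by
  induction n using Nat.twoStepInduction with
  | zero => exact ⟨1, 0, by simp [GenContFract.contsAux]⟩
  | one => exact ⟨⌊v⌋, 1, by simp [GenContFract.contsAux]⟩
  | more n ih ih' =>
    obtain ⟨p, q, hpq⟩ := ih
    obtain ⟨p', q', hpq'⟩ := ih'
    rcases hs : (GenContFract.of v).s.get? n with _ | gp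
    · exact ⟨p', q', by rw [GenContFract.contsAux_stable_of_terminated n.succ.le_succ hs, hpq']⟩
    · obtain ⟨ha, z, hz⟩ := GenContFract.of_partNum_eq_one_and_exists_int_partDen_eq hs
      refine ⟨z * p' + p, z * q' + q, ?_⟩
      rw [GenContFract.contsAux_recurrence hs hpq hpq', ha, hz]
      push_cast
      simp only [one_mul]

lemma exists_isCoprime_nums_eq_dens_eq {v : K} {n : ℕ}
    (hn : ¬(GenContFract.of v).TerminatedAt n) :
    ∃ p q : ℤ, IsCoprime p q ∧ (GenContFract.of v).nums n = p ∧ (GenContFract.of v).dens n = q := by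
  obtain ⟨p, q, hpq⟩ := exists_int_contsAux_eq v (n + 1)
  obtain ⟨p', q', hpq'⟩ := exists_int_contsAux_eq v (n + 2)
  have hdet := SimpContFract.determinant (s := SimpContFract.of v) hn
  change (GenContFract.of v).nums n * (GenContFract.of v).dens (n + 1) -
    (GenContFract.of v).dens n * (GenContFract.of v).nums (n + 1) = _ at hdet
  simp only [GenContFract.num_eq_conts_a, GenContFract.den_eq_conts_b,
    GenContFract.nth_cont_eq_succ_nth_contAux, hpq, hpq'] at hdet ⊢
  have hdet : p * q' - q * p' = (-1) ^ (n + 1) := by exact_mod_cast hdet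
  have hsq : ((-1 : ℤ) ^ (n + 1)) * (-1) ^ (n + 1) = 1 := by rw [← mul_pow]; norm_num
  exact ⟨p, q, ⟨(-1) ^ (n + 1) * q', -(-1) ^ (n + 1) * p',
    by linear_combination (-1) ^ (n + 1) * hdet + hsq⟩, rfl, rfl⟩

variable [IsStrictOrderedRing K]

lemma one_le_dens_of {v : K} {n : ℕ} (hn : ¬(GenContFract.of v).TerminatedAt n) :
    1 ≤ (GenContFract.of v).dens n := by
  have hfib := GenContFract.succ_nth_fib_le_of_nth_den (v := v) (n := n)
    (.inr fun h => hn (GenContFract.terminated_stable n.pred_le h))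
  exact le_trans (by exact_mod_cast Nat.fib_pos.2 n.succ_pos) hfib

lemma abs_dens_mul_sub_nums_le {v : K} {n : ℕ} (hn : ¬(GenContFract.of v).TerminatedAt n) :
    |(GenContFract.of v).dens n * v - (GenContFract.of v).nums n| ≤
      1 / (GenContFract.of v).dens n := by
  have hpos : 0 < (GenContFract.of v).dens n := one_pos.trans_le (one_le_dens_of hn)
  have hmono : (GenContFract.of v).dens n ≤ (GenContFract.of v).dens (n + 1) :=
    GenContFract.of_den_mono
  have hconv := GenContFract.abs_sub_convs_le hn
  calc |(GenContFract.of v).dens n * v - (GenContFract.of v).nums n|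
      = (GenContFract.of v).dens n * |v - (GenContFract.of v).convs n| := by
        rw [GenContFract.conv_eq_num_div_den, ← abs_of_pos hpos, ← abs_mul, abs_of_pos hpos,
          mul_sub, mul_div_cancel₀ _ hpos.ne']
    _ ≤ (GenContFract.of v).dens n *
        (1 / ((GenContFract.of v).dens n * (GenContFract.of v).dens (n + 1))) := by gcongr
    _ = 1 / (GenContFract.of v).dens (n + 1) := by field_simp
    _ ≤ 1 / (GenContFract.of v).dens n := by gcongr

end ContinuedFraction

section Liouville

lemma one_div_two_mul_le_abs_mul_sub {K : Type*} [Field K] [LinearOrder K] [IsStrictOrderedRing K]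
    {x : K} {p q a b : ℤ} (hpq : IsCoprime p q) (hx : |q * x - p| ≤ 1 / q) (hb : b ≠ 0)
    (hbq : 2 * |b| ≤ q) :
    1 / (2 * q : K) ≤ |b * x - a| := by
  have hq : (0 : K) < q := by exact_mod_cast (by have := abs_pos.2 hb; omega : 0 < q)
  have hne : b * p - a * q ≠ 0 := fun h0 => by
    have hdvd : q ∣ b := hpq.symm.dvd_of_dvd_mul_right ⟨a, by linarith⟩
    have := Int.le_of_dvd (abs_pos.2 hb) ((dvd_abs _ _).2 hdvd)
    have := abs_pos.2 hb
    omega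
  have hone : (1 : K) ≤ |(b * p - a * q : K)| := by exact_mod_cast Int.one_le_abs hne
  have hhalf : |(b : K) * (q * x - p)| ≤ 1 / 2 := by
    have hbq' : 2 * |(b : K)| ≤ q := by exact_mod_cast hbq
    calc |(b : K) * (q * x - p)| = |(b : K)| * |q * x - p| := abs_mul _ _
      _ ≤ q / 2 * (1 / q) := by gcongr; linarith
      _ = 1 / 2 := by field_simp
  have htri : |(b * p - a * q : K)| ≤ |b * x - a| * q + |(b : K) * (q * x - p)| := by
    calc |(b * p - a * q : K)| = |(b * x - a) * q - b * (q * x - p)| := by ring_nf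
      _ ≤ |(b * x - a) * q| + |(b : K) * (q * x - p)| := abs_sub _ _
      _ = _ := by rw [abs_mul (_ - _), abs_of_pos hq]
  rw [div_le_iff₀ (by positivity)]
  linarith

variable {ξ : ℝ}

lemma not_terminatedAt_of_irrational (hξ : Irrational ξ) (n : ℕ) :
    ¬(GenContFract.of ξ).TerminatedAt n := fun h => by
  obtain ⟨r, hr⟩ := (GenContFract.terminates_iff_rat ξ).1 ⟨n, h⟩
  exact hξ ⟨r, hr.symm⟩

lemma tendsto_dens_atTop (hξ : Irrational ξ) : Tendsto (GenContFract.of ξ).dens atTop atTop := by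
  refine tendsto_atTop_mono (fun n => ?_) tendsto_natCast_atTop_atTop
  have hfib := GenContFract.succ_nth_fib_le_of_nth_den (v := ξ) (n := n)
    (.inr (not_terminatedAt_of_irrational hξ _))
  have := Nat.le_fib_add_one (n + 1)
  exact le_trans (by exact_mod_cast (by omega : n ≤ Nat.fib (n + 1))) hfib

lemma exists_le_and_le_pow_of_tendsto_atTop {u : ℕ → ℝ} {S : ℕ} (hu : Tendsto u atTop atTop)
    (hgrow : ∀ᶠ n in atTop, u (n + 1) ≤ u n ^ S) :
    ∃ N : ℕ, ∀ x : ℝ, 2 ≤ x → ∃ n, x ≤ u n ∧ u n ≤ x ^ N := by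
  obtain ⟨k, hk⟩ := eventually_atTop.1 (hgrow.and (hu.eventually_ge_atTop 0))
  obtain ⟨N, hN⟩ := pow_unbounded_of_one_lt (u k) one_lt_two
  refine ⟨max N S, fun x hx => ?_⟩
  have hex : ∃ j, x ≤ u (k + j) :=
    (((tendsto_add_atTop_iff_nat k).2 hu).eventually_ge_atTop x).exists.imp
      fun j hj => by rwa [add_comm]
  classical
  refine ⟨k + Nat.find hex, Nat.find_spec hex, ?_⟩
  rcases hj : Nat.find hex with _ | j
  · calc u k ≤ 2 ^ N := hN.le
      _ ≤ x ^ N := by gcongr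
      _ ≤ x ^ max N S := by gcongr; exacts [by linarith, le_max_left _ _]
  · have hlt : u (k + j) < x := not_le.1 (Nat.find_min hex (by omega))
    calc u (k + j + 1) ≤ u (k + j) ^ S := (hk _ (by omega)).1
      _ ≤ x ^ S := by gcongr; exact (hk _ (by omega)).2
      _ ≤ x ^ max N S := by gcongr; exacts [by linarith, le_max_right _ _]

theorem not_liouville_of_dens_succ_le_pow {S : ℕ} (hξ : Irrational ξ)
    (hgrow : ∀ᶠ n in atTop, (GenContFract.of ξ).dens (n + 1) ≤ (GenContFract.of ξ).dens n ^ S) :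
    ¬Liouville ξ := by
  obtain ⟨N, hN⟩ := exists_le_and_le_pow_of_tendsto_atTop (tendsto_dens_atTop hξ) hgrow
  intro hL
  obtain ⟨a, b, hb, -, hab⟩ := hL (2 * N + 2)
  have hb' : (2 : ℝ) ≤ b := by exact_mod_cast hb
  obtain ⟨n, hbn, hnb⟩ := hN (2 * b) (by linarith)
  have hn := not_terminatedAt_of_irrational hξ n
  obtain ⟨p, q, hpq, hp, hq⟩ := exists_isCoprime_nums_eq_dens_eq hn
  have hconv := abs_dens_mul_sub_nums_le hn
  rw [hp, hq] at hconv
  rw [hq] at hbn hnb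
  have hq0 : (0 : ℝ) < q := by linarith
  have hfar : 1 / (2 * q : ℝ) ≤ |b * ξ - a| :=
    one_div_two_mul_le_abs_mul_sub hpq hconv (by omega)
      (by rw [abs_of_pos (by omega)]; exact_mod_cast hbn)
  refine hab.not_ge ?_
  calc 1 / (b : ℝ) ^ (2 * N + 2) = 1 / (b * (b * (b * b) ^ N)) := by ring_nf
    _ ≤ 1 / (b * (2 * (2 * b) ^ N)) := by gcongr
    _ ≤ 1 / (b * (2 * q)) := by gcongr
    _ = 1 / (2 * q) / b := by field_simp
    _ ≤ |b * ξ - a| / b := by gcongr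
    _ = |ξ - a / b| := by
      have hb0 : (0 : ℝ) < b := by linarith
      rw [← abs_of_pos hb0, ← abs_div, abs_of_pos hb0, sub_div, mul_div_cancel_left₀ _ hb0.ne']

end Liouville

/-- The continued fraction data of `α` in the indexing of the statement: complete quotients
`1 / β k` of the Gauss map, partial quotients `a k`, and denominators `q k` of the convergents,
all starting at `k = 1`, so that `q (k + 1)` is the denominator of `[0; a 1, …, a k]`. -/
structure IsContFractExpansion (α : ℝ) (a : ℕ → ℕ) (β : ℕ → ℝ) (q : ℕ → ℕ) : Prop where
  irrational : Irrational α
  mem_Ioo : α ∈ Set.Ioo (0 : ℝ) 1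
  beta_one : β 1 = α
  gauss_map : ∀ k : ℕ, 1 ≤ k → (a k : ℤ) = ⌊1 / β k⌋ ∧ β (k + 1) = 1 / β k - a k
  den_one : q 1 = 1
  den_two : q 2 = a 1
  den_succ : ∀ k : ℕ, 2 ≤ k → q (k + 1) = a k * q k + q (k - 1)

/-- The indices `k` at which the denominators grow faster than the power `s`; this is the set `E`
of the paper for `s = 1 / τ + 3`. -/
def resonantIndices (q : ℕ → ℕ) (s : ℝ) : Set ℕ :=
  {k : ℕ | 1 < k ∧ (q k : ℝ) ^ s < (q (k + 1) : ℝ)}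

/-- The frequencies `±j q_k`, `1 ≤ j ≤ a_k`, attached to the resonant indices; this is the set `M`
of the paper for `s = 1 / τ + 3`. -/
def resonantSet (a q : ℕ → ℕ) (s : ℝ) : Set ℤ :=
  {m : ℤ | ∃ k ∈ resonantIndices q s, ∃ j : ℕ, 1 ≤ j ∧ j ≤ a k ∧
    (m = (j * q k : ℕ) ∨ m = -((j * q k : ℕ) : ℤ))}

namespace IsContFractExpansion

open GenContFract

variable {α : ℝ} {a : ℕ → ℕ} {β : ℕ → ℝ} {q : ℕ → ℕ}

lemma irrational_beta (hx : IsContFractExpansion α a β q) (k : ℕ) :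
    Irrational (β (k + 1)) := by
  induction k with
  | zero => exact hx.beta_one.symm ▸ hx.irrational
  | succ k ih =>
    rw [(hx.gauss_map (k + 1) k.succ_pos).2, one_div]
    exact (irrational_inv_iff.2 ih).sub_natCast _

lemma intFractPair_of_inv_beta (hx : IsContFractExpansion α a β q) (k : ℕ) :
    IntFractPair.of (β (k + 1))⁻¹ = ⟨a (k + 1), β (k + 2)⟩ := by
  obtain ⟨hfloor, hfract⟩ := hx.gauss_map (k + 1) k.succ_pos
  rw [one_div] at hfloor hfract
  rw [hfract, IntFractPair.of, Int.fract, ← hfloor, Int.cast_natCast]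

lemma stream_eq (hx : IsContFractExpansion α a β q) (k : ℕ) :
    IntFractPair.stream α (k + 1) = some ⟨a (k + 1), β (k + 2)⟩ := by
  induction k with
  | zero =>
    have hfract : (IntFractPair.of α).fr = β 1 :=
      (Int.fract_eq_self.2 ⟨hx.mem_Ioo.1.le, hx.mem_Ioo.2⟩).trans hx.beta_one.symm
    rw [IntFractPair.stream_succ_of_some (IntFractPair.stream_zero α)
      (hfract ▸ (hx.irrational_beta 0).ne_zero), hfract, hx.intFractPair_of_inv_beta]
  | succ k ih =>
    rw [IntFractPair.stream_succ_of_some ih (hx.irrational_beta _).ne_zero]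
    exact congrArg some (hx.intFractPair_of_inv_beta (k + 1))

lemma of_get?_eq (hx : IsContFractExpansion α a β q) (k : ℕ) :
    (GenContFract.of α).s.get? k = some ⟨1, a (k + 1)⟩ := by
  simpa using get?_of_eq_some_of_succ_get?_intFractPair_stream (hx.stream_eq k)

lemma one_le_partialQuotient (hx : IsContFractExpansion α a β q) {k : ℕ} (hk : 1 ≤ k) :
    1 ≤ a k := by
  obtain ⟨k, rfl⟩ := Nat.exists_eq_add_of_le' hk
  have := of_one_le_get?_partDen (partDen_eq_s_b (hx.of_get?_eq k))
  exact Nat.one_le_cast.1 this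

lemma dens_eq (hx : IsContFractExpansion α a β q) (k : ℕ) :
    (GenContFract.of α).dens k = q (k + 1) := by
  induction k using Nat.twoStepInduction with
  | zero => simp [hx.den_one]
  | one => simp [first_den_eq (hx.of_get?_eq 0), hx.den_two]
  | more k ih ih' =>
    rw [dens_recurrence (hx.of_get?_eq (k + 1)) ih ih', hx.den_succ (k + 2) (by omega)]
    simp

lemma eventually_den_succ_le_rpow (hx : IsContFractExpansion α a β q) {s : ℝ}
    (hfin : (resonantSet a q s).Finite) :
    ∀ᶠ k in atTop, (q (k + 1) : ℝ) ≤ (q k : ℝ) ^ s := by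
  obtain ⟨B, hB⟩ := hfin.bddAbove
  have hq : Tendsto (fun k => (q k : ℝ)) atTop atTop :=
    (tendsto_add_atTop_iff_nat 1).1
      ((tendsto_dens_atTop hx.irrational).congr fun k => hx.dens_eq k)
  filter_upwards [eventually_gt_atTop 1, hq.eventually_gt_atTop B] with k hk hqB
  by_contra! hlt
  have hmem : (q k : ℤ) ∈ resonantSet a q s :=
    ⟨k, ⟨hk, hlt⟩, 1, le_rfl, hx.one_le_partialQuotient hk.le, .inl (by rw [one_mul])⟩
  exact hqB.not_ge (by exact_mod_cast hB hmem)

theorem not_liouville_of_finite_resonantSet (hx : IsContFractExpansion α a β q) {s : ℝ}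
    (hfin : (resonantSet a q s).Finite) : ¬Liouville α := by
  obtain ⟨S, hS⟩ := exists_nat_ge s
  refine not_liouville_of_dens_succ_le_pow (S := S) hx.irrational ?_
  filter_upwards [(tendsto_add_atTop_nat 1).eventually (hx.eventually_den_succ_le_rpow hfin)]
    with k hk
  have hone := one_le_dens_of (not_terminatedAt_of_irrational hx.irrational k)
  rw [hx.dens_eq] at hone
  rw [hx.dens_eq, hx.dens_eq, ← rpow_natCast]
  exact hk.trans (rpow_le_rpow_of_exponent_le hone hS)

end IsContFractExpansion

section FourierCoefficients

lemma norm_fourierCoeffOn_le {E : Type*} [NormedAddCommGroup E] [NormedSpace ℂ E] {a b : ℝ}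
    (hab : a < b) (f : ℝ → E) (m : ℤ) :
    ‖fourierCoeffOn hab f m‖ ≤ 1 / (b - a) * ∫ x in a..b, ‖f x‖ := by
  have hba : 0 ≤ 1 / (b - a) := (one_div_pos.2 (sub_pos.2 hab)).le
  rw [fourierCoeffOn_eq_integral, norm_smul, Real.norm_of_nonneg hba]
  gcongr
  refine (intervalIntegral.norm_integral_le_integral_norm hab.le).trans_eq ?_
  simp only [norm_smul, fourier_apply, Circle.norm_coe, one_mul]

lemma fourierCoeffOn_eq_mul_fourierCoeffOn_deriv {a b : ℝ} (hab : a < b) {f : ℝ → ℂ}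
    (hf : ContDiff ℝ 1 f) (hper : Function.Periodic f (b - a)) {m : ℤ} (hm : m ≠ 0) :
    fourierCoeffOn hab f m =
      (b - a) / (2 * π * Complex.I) * ((m : ℂ)⁻¹ * fourierCoeffOn hab (deriv f) m) := by
  have hends : f b = f a := by rw [← hper a, add_sub_cancel]
  rw [fourierCoeffOn_of_hasDerivAt hab hm
    (fun x _ => (hf.differentiable one_ne_zero x).hasDerivAt)
    ((hf.continuous_deriv le_rfl).intervalIntegrable _ _), hends]
  have := Complex.I_ne_zero
  field_simp
  ring

lemma isBigO_fourierCoeffOn_of_contDiff {a b : ℝ} (hab : a < b) {N : ℕ} {f : ℝ → ℂ}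
    (hf : ContDiff ℝ N f) (hper : Function.Periodic f (b - a)) :
    fourierCoeffOn hab f =O[cofinite] fun m : ℤ => ((m : ℂ) ^ N)⁻¹ := by
  induction N generalizing f with
  | zero =>
    refine .of_bound (1 / (b - a) * ∫ x in a..b, ‖f x‖) (.of_forall fun m => ?_)
    simpa using norm_fourierCoeffOn_le hab f m
  | succ N ih =>
    have hderiv : ContDiff ℝ N (deriv f) := (contDiff_succ_iff_deriv.1 hf).2.2
    have hderiv_per : Function.Periodic (deriv f) (b - a) := fun x => by
      rw [← deriv_comp_add_const, funext hper]
    have hcoeff : ∀ᶠ m : ℤ in cofinite, (b - a) / (2 * π * Complex.I) *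
        ((m : ℂ)⁻¹ * fourierCoeffOn hab (deriv f) m) = fourierCoeffOn hab f m := by
      filter_upwards [eventually_cofinite_ne (0 : ℤ)] with m hm
      exact (fourierCoeffOn_eq_mul_fourierCoeffOn_deriv hab (hf.of_le (by simp)) hper hm).symm
    refine .congr' (((Asymptotics.isBigO_refl _ _).mul (ih hderiv hderiv_per)).const_mul_left _)
      hcoeff (.of_forall fun m => ?_)
    simp only [pow_succ', mul_inv]

lemma isBigO_fourierCoeff_of_contDiff {T : ℝ} [hT : Fact (0 < T)] {N : ℕ} {f : AddCircle T → ℂ}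
    (hf : ContDiff ℝ N fun t : ℝ => f t) :
    fourierCoeff f =O[cofinite] fun m : ℤ => ((m : ℂ) ^ N)⁻¹ := by
  have hlift : fourierCoeff f = fourierCoeffOn hT.out fun t : ℝ => f t := by
    ext m
    rw [fourierCoeffOn_eq_integral, fourierCoeff_eq_intervalIntegral _ _ 0]
    simp only [fourier_coe_apply, sub_zero, zero_add]
  rw [hlift]
  exact isBigO_fourierCoeffOn_of_contDiff _ hf fun t => by simp

end FourierCoefficients

section SmallDivisors

lemma four_mul_abs_sub_round_le_norm_fourier_sub_one (α : ℝ) (m : ℤ) :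
    4 * |m * α - round (m * α)| ≤ ‖fourier m (α : AddCircle (1 : ℝ)) - 1‖ := by
  set δ := m * α - round (m * α) with hδ
  have hexp : fourier m (α : AddCircle (1 : ℝ)) =
      Complex.exp (Complex.I * ((2 * (π * δ) : ℝ) : ℂ)) := by
    have hsplit : (2 * π * Complex.I * m * α / ((1 : ℝ) : ℂ) : ℂ) =
        Complex.I * ((2 * (π * δ) : ℝ) : ℂ) + round (m * α) * (2 * π * Complex.I) := by
      rw [hδ]
      push_cast
      ring
    rw [fourier_coe_apply, hsplit, Complex.exp_add, Complex.exp_int_mul_two_pi_mul_I, mul_one]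
  have habs : |π * δ| = π * |δ| := by rw [abs_mul, abs_of_pos pi_pos]
  have hjordan : 2 / π * |π * δ| ≤ |sin (π * δ)| := by
    refine mul_abs_le_abs_sin ?_
    rw [habs]
    nlinarith [pi_pos, abs_sub_round (m * α)]
  calc 4 * |δ| = 2 * (2 / π * |π * δ|) := by rw [habs]; field_simp; ring
    _ ≤ 2 * |sin (π * δ)| := by gcongr
    _ = ‖fourier m (α : AddCircle (1 : ℝ)) - 1‖ := by
      rw [hexp, Complex.norm_exp_I_mul_ofReal_sub_one, mul_div_cancel_left₀ _ two_ne_zero,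
        norm_mul, norm_two, Real.norm_eq_abs]

variable {α : ℝ}

lemma fourier_ne_one_of_irrational (hα : Irrational α) {m : ℤ} (hm : m ≠ 0) :
    fourier m (α : AddCircle (1 : ℝ)) ≠ 1 := fun h => by
  have hround := four_mul_abs_sub_round_le_norm_fourier_sub_one α m
  rw [h, sub_self, norm_zero] at hround
  have hzero : m * α - round (m * α) = 0 := abs_nonpos_iff.1 (by linarith)
  exact ((hα.intCast_mul hm).sub_intCast _).ne_zero hzero

lemma exists_one_div_pow_le_abs_mul_sub (hα : Irrational α) (hL : ¬Liouville α) :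
    ∃ n : ℕ, ∀ m : ℤ, m ≠ 0 → ∀ r : ℤ, 1 / (2 * |(m : ℝ)|) ^ n ≤ |m * α - r| := by
  simp only [Liouville, not_forall, not_exists, not_and, not_lt] at hL
  obtain ⟨n, hn⟩ := hL
  refine ⟨n, fun m hm r => ?_⟩
  have hm1 : 1 ≤ |m| := Int.one_le_abs hm
  have hm1' : (1 : ℝ) ≤ |(m : ℝ)| := by exact_mod_cast hm1
  have hm0 : (m : ℝ) ≠ 0 := by exact_mod_cast hm
  have hfrac : ((2 * r * m.sign : ℤ) : ℝ) / ((2 * |m| : ℤ) : ℝ) = r / m := by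
    have hsign : (m.sign : ℝ) * m = |(m : ℝ)| := by exact_mod_cast Int.sign_mul_self_eq_abs m
    push_cast
    field_simp
    linear_combination (r : ℝ) * hsign
  have hclose := hn (2 * r * m.sign) (2 * |m|) (by omega) (hα.ne_rational _ _)
  rw [hfrac] at hclose
  push_cast at hclose
  calc 1 / (2 * |(m : ℝ)|) ^ n ≤ 1 * |α - r / m| := by rwa [one_mul]
    _ ≤ |(m : ℝ)| * |α - r / m| := by gcongr
    _ = |m * α - r| := by rw [← abs_mul, mul_sub, mul_div_cancel₀ _ hm0]

lemma exists_isBigO_inv_fourier_sub_one (hα : Irrational α) (hL : ¬Liouville α) :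
    ∃ n : ℕ, (fun m : ℤ => (fourier m (α : AddCircle (1 : ℝ)) - 1)⁻¹) =O[cofinite]
      fun m : ℤ => (m : ℂ) ^ n := by
  obtain ⟨n, hn⟩ := exists_one_div_pow_le_abs_mul_sub hα hL
  refine ⟨n, .of_bound (2 ^ n) ?_⟩
  filter_upwards [eventually_cofinite_ne (0 : ℤ)] with m hm
  have hpos : 0 < (2 * |(m : ℝ)|) ^ n :=
    pow_pos (mul_pos two_pos (abs_pos.2 (Int.cast_ne_zero.2 hm))) n
  have hlower : 1 / (2 * |(m : ℝ)|) ^ n ≤ ‖fourier m (α : AddCircle (1 : ℝ)) - 1‖ :=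
    calc 1 / (2 * |(m : ℝ)|) ^ n ≤ |m * α - round (m * α)| := hn m hm _
      _ ≤ 4 * |m * α - round (m * α)| := by linarith [abs_nonneg (m * α - round (m * α))]
      _ ≤ _ := four_mul_abs_sub_round_le_norm_fourier_sub_one α m
  rw [norm_inv, norm_pow, Complex.norm_intCast, ← mul_pow]
  exact inv_le_of_inv_le₀ hpos (by rwa [← one_div])

end SmallDivisors

section CohomologicalEquation

theorem exists_continuousMap_eq_fourierCoeff_zero_add_sub {T : ℝ} [Fact (0 < T)]
    {f : C(AddCircle T, ℂ)} {θ : AddCircle T} (hθ : ∀ m : ℤ, m ≠ 0 → fourier m θ ≠ 1)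
    (hsum : Summable fun m : ℤ => fourierCoeff f m * (fourier m θ - 1)⁻¹) :
    ∃ g : C(AddCircle T, ℂ), ∀ x, f x = fourierCoeff f 0 + (g (x + θ) - g x) := by
  let b : ℤ → ℂ := fun m => fourierCoeff f m * (fourier m θ - 1)⁻¹
  have hcoeff : ∀ m : ℤ, m ≠ 0 → b m * (fourier m θ - 1) = fourierCoeff f m := fun m hm =>
    inv_mul_cancel_right₀ (sub_ne_zero.2 (hθ m hm)) _
  have hfsum : Summable (fourierCoeff f) := by
    refine summable_of_isBigO hsum.norm (.of_bound 2 ?_)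
    filter_upwards [eventually_cofinite_ne (0 : ℤ)] with m hm
    have hle : ‖fourier m θ - 1‖ ≤ 2 :=
      calc ‖fourier m θ - 1‖ ≤ ‖fourier m θ‖ + ‖(1 : ℂ)‖ := norm_sub_le _ _
        _ = 2 := by rw [fourier_apply, Circle.norm_coe, norm_one]; norm_num
    calc ‖fourierCoeff f m‖ = ‖fourier m θ - 1‖ * ‖b m‖ := by rw [← norm_mul, mul_comm, hcoeff m hm]
      _ ≤ 2 * ‖‖b m‖‖ := by rw [norm_norm]; gcongr
  have hgsum : Summable fun m => b m • (fourier m : C(AddCircle T, ℂ)) :=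
    .of_norm (by simpa only [norm_smul, fourier_norm, mul_one] using hsum.norm)
  have hg := fun x => (ContinuousMap.evalCLM ℂ x).hasSum hgsum.hasSum
  refine ⟨∑' m, b m • fourier m, fun x => ?_⟩
  refine (has_pointwise_sum_fourier_series_of_summable hfsum x).unique ?_
  refine ((hasSum_ite_eq (0 : ℤ) (fourierCoeff f 0)).add ((hg (x + θ)).sub (hg x))).congr_fun
    fun m => ?_
  have hadd : fourier m (x + θ) = fourier m x * fourier m θ := by
    simp only [fourier_apply, smul_add, AddCircle.toCircle_add, Circle.coe_mul]
  rcases eq_or_ne m 0 with rfl | hm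
  · simp
  · simp only [hm, ↓reduceIte, zero_add, map_smul, ContinuousMap.evalCLM_apply, smul_eq_mul,
      hadd, ← hcoeff m hm]
    ring

theorem exists_continuous_eq_const_add_sub {α : ℝ} (hα : Irrational α) (hL : ¬Liouville α)
    {h : AddCircle (1 : ℝ) → ℝ}
    (hsmooth : ContDiff ℝ ((⊤ : ℕ∞) : WithTop ℕ∞) fun t : ℝ => h t) :
    ∃ g : AddCircle (1 : ℝ) → ℝ, Continuous g ∧
      ∃ c : ℝ, ∀ x, h x = c + (g (x + (α : AddCircle (1 : ℝ))) - g x) := by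
  have hcont : Continuous h := isQuotientMap_quotient_mk'.continuous_iff.2 hsmooth.continuous
  let f : C(AddCircle (1 : ℝ), ℂ) := ⟨fun x => (h x : ℂ), by fun_prop⟩
  obtain ⟨n, hn⟩ := exists_isBigO_inv_fourier_sub_one hα hL
  have hdecay : fourierCoeff f =O[cofinite] fun m : ℤ => ((m : ℂ) ^ (n + 2))⁻¹ :=
    isBigO_fourierCoeff_of_contDiff
      (contDiff_infty.1 (Complex.ofRealCLM.contDiff.comp hsmooth) _)
  have hsum : Summable fun m : ℤ =>
      fourierCoeff f m * (fourier m (α : AddCircle (1 : ℝ)) - 1)⁻¹ := by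
    refine summable_of_isBigO (Real.summable_one_div_int_pow.2 one_lt_two) ?_
    refine (hdecay.mul hn).trans (.of_bound 1 ?_)
    filter_upwards [eventually_cofinite_ne (0 : ℤ)] with m hm
    have hm0 : (m : ℂ) ≠ 0 := Int.cast_ne_zero.2 hm
    rw [pow_add, mul_inv_rev, inv_mul_cancel_right₀ (pow_ne_zero n hm0)]
    simp
  obtain ⟨g, hg⟩ :=
    exists_continuousMap_eq_fourierCoeff_zero_add_sub
      (fun _ => fourier_ne_one_of_irrational hα) hsum
  refine ⟨fun x => (g x).re, by fun_prop, (fourierCoeff f 0).re, fun x => ?_⟩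
  simpa [f] using congrArg Complex.re (hg x)

end CohomologicalEquation

section Equicontinuity

lemma uniformEquicontinuous_iterate_of_semiconj {X Y : Type*} [UniformSpace X] [UniformSpace Y]
    {S : Y → Y} {T : X → X} {φ : X → Y} {ψ : Y → X}
    (hS : UniformEquicontinuous fun n : ℕ => S^[n]) (hφ : UniformContinuous φ)
    (hψ : UniformContinuous ψ) (hsemi : Function.Semiconj φ T S)
    (hinv : Function.LeftInverse ψ φ) :
    UniformEquicontinuous fun n : ℕ => T^[n] := by
  have hiter : (fun n : ℕ => T^[n]) = fun n : ℕ => ψ ∘ (S^[n] ∘ φ) := by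
    ext n x
    rw [Function.comp_apply, Function.comp_apply, ← hsemi.iterate_right n x, hinv]
  rw [hiter]
  intro U hU
  exact hφ.eventually (hS _ (hψ hU))

lemma uniformEquicontinuous_iterate_of_isometry {X : Type*} [PseudoMetricSpace X] {S : X → X}
    (hS : Isometry S) : UniformEquicontinuous fun n : ℕ => S^[n] :=
  LipschitzWith.uniformEquicontinuous _ 1 fun n => by simpa using hS.lipschitz.iterate n

theorem uniformEquicontinuous_iterate_skewProduct {X G : Type*} [PseudoMetricSpace X]
    [SeminormedAddCommGroup G] {S : X → X} (hS : Isometry S) {g : X → G}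
    (hg : UniformContinuous g) (c : G) :
    UniformEquicontinuous fun n : ℕ =>
      (fun p : X × G => (S p.1, p.2 + (c + (g (S p.1) - g p.1))))^[n] := by
  have hR : Isometry (Prod.map S (· + c)) := hS.prodMap (isometry_add_right c)
  refine uniformEquicontinuous_iterate_of_semiconj
    (uniformEquicontinuous_iterate_of_isometry hR)
    (φ := fun p => (p.1, p.2 - g p.1)) (ψ := fun p => (p.1, p.2 + g p.1))
    (uniformContinuous_fst.prodMk (uniformContinuous_snd.sub (hg.comp uniformContinuous_fst)))
    (uniformContinuous_fst.prodMk (uniformContinuous_snd.add (hg.comp uniformContinuous_fst)))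
    (fun p => Prod.ext rfl ?_) fun p => Prod.ext rfl (sub_add_cancel _ _)
  simp only [Prod.map_snd]
  abel

end Equicontinuity

section MeasureComplexity

variable {X : Type*} [PseudoMetricSpace X] {T : X → X}

lemma dbar_le_of_forall_dist_le {r : ℝ} (hr : 0 ≤ r) {x y : X}
    (hxy : ∀ i, dist (T^[i] x) (T^[i] y) ≤ r) (n : ℕ) : dbar T n x y ≤ r := by
  refine div_le_of_le_mul₀ n.cast_nonneg hr ?_
  calc ∑ i ∈ Finset.range n, dist (T^[i] x) (T^[i] y) ≤ (Finset.range n).card • r :=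
        Finset.sum_le_card_nsmul _ _ _ fun i _ => hxy i
    _ = r * n := by rw [Finset.card_range, nsmul_eq_mul, mul_comm]

lemma exists_forall_measureComplexity_le [MeasurableSpace X]
    (hX : TotallyBounded (Set.univ : Set X)) (hT : UniformEquicontinuous fun n : ℕ => T^[n])
    (ρ : Measure X) [IsProbabilityMeasure ρ] {ε : ℝ} (hε : 0 < ε) :
    ∃ m : ℕ, ∀ n, measureComplexity T ρ n ε ≤ m := by
  obtain ⟨δ, hδ, hclose⟩ := Metric.uniformEquicontinuous_iff.1 hT (ε / 2) (half_pos hε)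
  obtain ⟨t, ht, hcover⟩ := Metric.totallyBounded_iff.1 hX δ hδ
  have := ht.fintype
  refine ⟨Fintype.card t, fun n => Nat.sInf_le ⟨fun i => (Fintype.equivFin t).symm i, ?_⟩⟩
  have huniv : ⋃ i, {y | dbar T n ((Fintype.equivFin t).symm i : X) y < ε} = Set.univ := by
    refine Set.eq_univ_of_forall fun y => ?_
    obtain ⟨x, hx, hyx⟩ := Set.mem_iUnion₂.1 (hcover (Set.mem_univ y))
    refine Set.mem_iUnion.2 ⟨Fintype.equivFin t ⟨x, hx⟩, ?_⟩
    rw [Equiv.symm_apply_apply]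
    refine (dbar_le_of_forall_dist_le (half_pos hε).le (fun i => ?_) n).trans_lt (half_lt_self hε)
    exact (hclose x y (Metric.mem_ball'.1 hyx) i).le
  rw [huniv, measure_univ, ENNReal.toReal_one]
  exact sub_lt_self 1 hε

theorem complexityWeakerThan_of_uniformEquicontinuous [MeasurableSpace X]
    (hX : TotallyBounded (Set.univ : Set X)) (hT : UniformEquicontinuous fun n : ℕ => T^[n])
    (ρ : Measure X) [IsProbabilityMeasure ρ] {U : ℕ → ℝ} (hU : Tendsto U atTop atTop) :
    ComplexityWeakerThan T ρ U := fun ε hε => by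
  obtain ⟨m, hm⟩ := exists_forall_measureComplexity_le hX hT ρ hε
  exact (tendsto_bdd_div_atTop_nhds_zero (b := (0 : ℝ)) (B := m)
    (.of_forall fun _ => Nat.cast_nonneg _)
    (.of_forall fun n => Nat.cast_le.2 (hm n)) hU).liminf_eq

end MeasureComplexity

theorem complexity_weaker_of_resonant_set_finite_general
    {α : ℝ} {a : ℕ → ℕ} {β : ℕ → ℝ} {q : ℕ → ℕ} (hα : IsContFractExpansion α a β q) {s : ℝ}
    (hfin : (resonantSet a q s).Finite) {h : AddCircle (1 : ℝ) → ℝ}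
    (hsmooth : ContDiff ℝ ((⊤ : ℕ∞) : WithTop ℕ∞) fun t : ℝ => h t)
    {T : AddCircle (1 : ℝ) × AddCircle (1 : ℝ) → AddCircle (1 : ℝ) × AddCircle (1 : ℝ)}
    (hT : ∀ p, T p = (p.1 + (α : AddCircle (1 : ℝ)), p.2 + ((h p.1 : ℝ) : AddCircle (1 : ℝ))))
    (ρ : Measure (AddCircle (1 : ℝ) × AddCircle (1 : ℝ))) [IsProbabilityMeasure ρ]
    {U : ℕ → ℝ} (hU : Tendsto U atTop atTop) :
    ComplexityWeakerThan T ρ U := by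
  obtain ⟨g, hg, c, hgc⟩ := exists_continuous_eq_const_add_sub hα.irrational
    (hα.not_liouville_of_finite_resonantSet hfin) hsmooth
  have hg' : UniformContinuous fun x => (g x : AddCircle (1 : ℝ)) :=
    CompactSpace.uniformContinuous_of_continuous ((AddCircle.continuous_mk' 1).comp hg)
  have hTg : T = fun p => (p.1 + (α : AddCircle (1 : ℝ)), p.2 + ((c : AddCircle (1 : ℝ)) +
      ((g (p.1 + (α : AddCircle (1 : ℝ))) : AddCircle (1 : ℝ)) - g p.1))) := by
    ext1 p
    rw [hT, hgc, AddCircle.coe_add, AddCircle.coe_sub]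
  refine complexityWeakerThan_of_uniformEquicontinuous isCompact_univ.totallyBounded ?_ ρ hU
  rw [hTg]
  exact uniformEquicontinuous_iterate_skewProduct (isometry_add_right _) hg' c

/-- If the resonant set `M` is finite, then every invariant Borel probability measure of the
smooth skew product `T(x,y) = (x+α, y+h(x) mod 1)` has measure complexity weaker than `n^τ`. -/
theorem complexity_weaker_of_resonant_set_finite
    (α : ℝ) (hirr : Irrational α) (hα : α ∈ Set.Ioo (0 : ℝ) 1)
    (h : AddCircle (1 : ℝ) → ℝ)
    (hsmooth : ContDiff ℝ ((⊤ : ℕ∞) : WithTop ℕ∞) (fun t : ℝ => h ((t : AddCircle (1 : ℝ)))))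
    (T : AddCircle (1 : ℝ) × AddCircle (1 : ℝ) → AddCircle (1 : ℝ) × AddCircle (1 : ℝ))
    (hT : ∀ p, T p = (p.1 + (α : AddCircle (1 : ℝ)), p.2 + ((h p.1 : ℝ) : AddCircle (1 : ℝ))))
    -- the partial quotients `a_k` of `α`, via the Gauss map
    (a : ℕ → ℕ) (β : ℕ → ℝ) (hβ1 : β 1 = α)
    (hGauss : ∀ k : ℕ, 1 ≤ k → (a k : ℤ) = ⌊1 / β k⌋ ∧ β (k + 1) = 1 / β k - a k)
    -- the denominators `q_k` of the convergents of `α`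
    (q : ℕ → ℕ) (hq1 : q 1 = 1) (hq2 : q 2 = a 1)
    (hqrec : ∀ k : ℕ, 2 ≤ k → q (k + 1) = a k * q k + q (k - 1))
    (τ : ℝ) (hτ : 0 < τ)
    (E : Set ℕ) (hE : E = {k : ℕ | 1 < k ∧ ((q k : ℝ)) ^ (1 / τ + 3) < (q (k + 1) : ℝ)})
    (M : Set ℤ) (hM : M = {m : ℤ | ∃ k ∈ E, ∃ j : ℕ, 1 ≤ j ∧ j ≤ a k ∧
      (m = (j * q k : ℕ) ∨ m = -((j * q k : ℕ) : ℤ))})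
    (hMfin : M.Finite)
    (ρ : Measure (AddCircle (1 : ℝ) × AddCircle (1 : ℝ)))
    (hρprob : IsProbabilityMeasure ρ) (hρinv : MeasurePreserving T ρ ρ) :
    ComplexityWeakerThan T ρ (fun n : ℕ => (n : ℝ) ^ τ) := by
  subst hE hM
  exact complexity_weaker_of_resonant_set_finite_general
    ⟨hirr, hα, hβ1, hGauss, hq1, hq2, hqrec⟩ hMfin hsmooth hT ρ
    ((tendsto_rpow_atTop hτ).comp tendsto_natCast_atTop_atTop)
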